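/- Let ε ∈ (0,1], let T ∈ ℚ with T > 0, and let (m, R, J, p, r) be an instance such that every job j ∈ J satisfies p(j) ≤ ε·T and such that p(J)/m + 2·area(J)/R ≤ 3ε·T. Then there exists a feasible schedule of J with makespan at most 4ε·T. -/

import Mathlib

/-- The set of jobs of `J` active at time `t` under schedule `σ` with processing times `p`. -/
def activeSet {ι : Type*} (J : Finset ι) (σ p : ι → ℚ) (t : ℚ) : Finset ι :=
  J.filter (fun j => σ j ≤ t ∧ t < σ j + p j)

/-- A schedule is feasible if at every time at most `m` jobs are active and the active jobs
use at most `R` resources in total. -/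
def Feasible {ι : Type*} (m R : ℕ) (J : Finset ι) (σ p : ι → ℚ) (r : ι → ℕ) : Prop :=
  ∀ t : ℚ, (activeSet J σ p t).card ≤ m ∧ ∑ j ∈ activeSet J σ p t, r j ≤ R

/-!
Start the jobs one after another in order of nonincreasing resource requirement, each at the
earliest time, not before the previous start, at which it fits. While a job `a` is waiting,
either `m` jobs are active, or the active jobs together with `a` exceed `R`; in the latter case some
job is active, each active one needs at least `r a`, and so the active jobs use at least `R / 2`.
Give job `j` the weight `1 / m + 2 r(j) / R`: then the active jobs have total weight at least `1` at
all times before the last start. Integrating over time, the last start is at most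
`∑ j, (1 / m + 2 r(j) / R) p(j)`.
-/

section ListScheduling

variable {ι : Type*}

lemma mem_activeSet {J : Finset ι} {σ p : ι → ℚ} {t : ℚ} {j : ι} :
    j ∈ activeSet J σ p t ↔ j ∈ J ∧ σ j ≤ t ∧ t < σ j + p j :=
  Finset.mem_filter

lemma activeSet_subset (J : Finset ι) (σ p : ι → ℚ) (t : ℚ) : activeSet J σ p t ⊆ J :=
  Finset.filter_subset _ _

lemma activeSet_anti_of_start_le {J : Finset ι} {σ : ι → ℚ} (p : ι → ℚ) {t t' : ℚ}
    (hσ : ∀ j ∈ J, σ j ≤ t) (htt' : t ≤ t') : activeSet J σ p t' ⊆ activeSet J σ p t := by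
  intro j hj
  obtain ⟨hjJ, -, hfinish⟩ := mem_activeSet.1 hj
  exact mem_activeSet.2 ⟨hjJ, hσ j hjJ, htt'.trans_lt hfinish⟩

lemma activeSet_insert_update_subset [DecidableEq ι] (J : Finset ι) (σ p : ι → ℚ) (a : ι)
    (x t : ℚ) :
    activeSet (insert a J) (Function.update σ a x) p t ⊆ insert a (activeSet J σ p t) := by
  intro j hj
  rcases eq_or_ne j a with rfl | hja
  · exact Finset.mem_insert_self _ _
  · simpa [mem_activeSet, hja] using hj

lemma activeSet_insert_update_subset_of_lt [DecidableEq ι] (J : Finset ι) (σ p : ι → ℚ) (a : ι)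
    {x t : ℚ} (htx : t < x) :
    activeSet (insert a J) (Function.update σ a x) p t ⊆ activeSet J σ p t := by
  intro j hj
  rcases eq_or_ne j a with rfl | hja
  · have hxt : x ≤ t := by simpa using (mem_activeSet.1 hj).2.1
    exact absurd hxt htx.not_ge
  · simpa [mem_activeSet, hja] using hj

lemma Feasible.insert_update [DecidableEq ι] {m R : ℕ} {J : Finset ι} {σ p : ι → ℚ} {r : ι → ℕ}
    {a : ι} {x : ℚ} (h : Feasible m R J σ p r) (ha : a ∉ J) (hσ : ∀ j ∈ J, σ j ≤ x)
    (hcard : (activeSet J σ p x).card < m) (hres : ∑ j ∈ activeSet J σ p x, r j + r a ≤ R) :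
    Feasible m R (insert a J) (Function.update σ a x) p r := by
  intro t
  rcases lt_or_ge t x with htx | hxt
  · have hsub := activeSet_insert_update_subset_of_lt J σ p a htx
    exact ⟨(Finset.card_le_card hsub).trans (h t).1,
      (Finset.sum_le_sum_of_subset hsub).trans (h t).2⟩
  · have hsub : activeSet (insert a J) (Function.update σ a x) p t ⊆
        insert a (activeSet J σ p x) :=
      (activeSet_insert_update_subset J σ p a x t).trans
        (Finset.insert_subset_insert a (activeSet_anti_of_start_le p hσ hxt))
    have ha' : a ∉ activeSet J σ p x := fun hmem => ha (activeSet_subset J σ p x hmem)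
    constructor
    · calc (activeSet (insert a J) (Function.update σ a x) p t).card
          ≤ (insert a (activeSet J σ p x)).card := Finset.card_le_card hsub
        _ = (activeSet J σ p x).card + 1 := Finset.card_insert_of_notMem ha'
        _ ≤ m := hcard
    · calc ∑ j ∈ activeSet (insert a J) (Function.update σ a x) p t, r j
          ≤ ∑ j ∈ insert a (activeSet J σ p x), r j := Finset.sum_le_sum_of_subset hsub
        _ = ∑ j ∈ activeSet J σ p x, r j + r a := by rw [Finset.sum_insert ha', add_comm]
        _ ≤ R := hres

/-- The weighted amount of processing that the jobs of `J` have received by time `t`. The formula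
has this meaning only for `t` at or after all start times, since a job that starts after `t`
contributes a negative amount. -/
def processedWeight (J : Finset ι) (σ p w : ι → ℚ) (t : ℚ) : ℚ :=
  ∑ j ∈ J, w j * min (t - σ j) (p j)

lemma processedWeight_le (J : Finset ι) (σ p : ι → ℚ) {w : ι → ℚ} (hw : ∀ j ∈ J, 0 ≤ w j)
    (t : ℚ) : processedWeight J σ p w t ≤ ∑ j ∈ J, w j * p j :=
  Finset.sum_le_sum fun j hj => mul_le_mul_of_nonneg_left (min_le_right _ _) (hw j hj)

lemma processedWeight_insert_update [DecidableEq ι] {J : Finset ι} (σ : ι → ℚ) {p : ι → ℚ}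
    (w : ι → ℚ) {a : ι} (ha : a ∉ J) (hpa : 0 ≤ p a) (x : ℚ) :
    processedWeight (insert a J) (Function.update σ a x) p w x = processedWeight J σ p w x := by
  have hnew : w a * min (x - Function.update σ a x a) (p a) = 0 := by simp [hpa]
  rw [processedWeight, Finset.sum_insert ha, hnew, zero_add]
  refine Finset.sum_congr rfl fun j hj => ?_
  rw [Function.update_of_ne (ne_of_mem_of_not_mem hj ha)]

lemma processedWeight_sub_of_no_completion {J : Finset ι} {σ p : ι → ℚ} (w : ι → ℚ) {s t : ℚ}
    (hst : s ≤ t) (hσ : ∀ j ∈ J, σ j ≤ s) (hfinish : ∀ j ∈ activeSet J σ p s, t ≤ σ j + p j) :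
    processedWeight J σ p w t - processedWeight J σ p w s =
      (t - s) * ∑ j ∈ activeSet J σ p s, w j := by
  rw [processedWeight, processedWeight, ← Finset.sum_sub_distrib, activeSet, Finset.sum_filter,
    Finset.mul_sum]
  refine Finset.sum_congr rfl fun j hj => ?_
  split_ifs with hactive
  · have hjt := hfinish j (mem_activeSet.2 ⟨hj, hactive⟩)
    rw [min_eq_left (by linarith), min_eq_left (by linarith)]
    ring
  · have hdone : σ j + p j ≤ s := not_lt.1 fun hlt => hactive ⟨hσ j hj, hlt⟩
    rw [min_eq_right (by linarith), min_eq_right (by linarith)]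
    ring

/-- Advance from completion to completion until the active set is admissible: each completion
removes a job from the active set, and `∅` is admissible. -/
lemma exists_admissible_time {J : Finset ι} {σ p w : ι → ℚ} {Admissible : Finset ι → Prop}
    (hempty : Admissible ∅) (hw : ∀ A ⊆ J, ¬ Admissible A → 1 ≤ ∑ j ∈ A, w j) {s : ℚ}
    (hσ : ∀ j ∈ J, σ j ≤ s) :
    ∃ x, s ≤ x ∧ Admissible (activeSet J σ p x) ∧
      x - s ≤ processedWeight J σ p w x - processedWeight J σ p w s := by
  induction hA : activeSet J σ p s using Finset.strongInduction generalizing s with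
  | H A ih =>
    subst hA
    by_cases hadm : Admissible (activeSet J σ p s)
    · exact ⟨s, le_rfl, hadm, by simp⟩
    have hne : (activeSet J σ p s).Nonempty :=
      Finset.nonempty_iff_ne_empty.2 fun hA => hadm (hA ▸ hempty)
    obtain ⟨k, hk, hkmin⟩ := Finset.exists_min_image _ (fun j => σ j + p j) hne
    have hsc : s < σ k + p k := (mem_activeSet.1 hk).2.2
    have hssub : activeSet J σ p (σ k + p k) ⊂ activeSet J σ p s :=
      (Finset.ssubset_iff_of_subset (activeSet_anti_of_start_le p hσ hsc.le)).2
        ⟨k, hk, fun hkc => lt_irrefl _ (mem_activeSet.1 hkc).2.2⟩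
    obtain ⟨x, hcx, hx, hwork⟩ := ih _ hssub (fun j hj => (hσ j hj).trans hsc.le) rfl
    have hadvance : σ k + p k - s ≤
        processedWeight J σ p w (σ k + p k) - processedWeight J σ p w s := by
      rw [processedWeight_sub_of_no_completion w hsc.le hσ hkmin]
      exact le_mul_of_one_le_right (sub_nonneg.2 hsc.le)
        (hw _ (activeSet_subset J σ p s) hadm)
    exact ⟨x, hsc.le.trans hcx, hx, by linarith⟩

/-- The weight `1 / m + 2 r(j) / R` of a job, chosen so that a set of jobs has weight at least `1`
as soon as it occupies all `m` machines or half of the resource capacity `R`. -/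
def saturationWeight (m R : ℕ) (r : ι → ℕ) (j : ι) : ℚ :=
  1 / m + 2 * r j / R

lemma saturationWeight_nonneg (m R : ℕ) (r : ι → ℕ) (j : ι) : 0 ≤ saturationWeight m R r j := by
  unfold saturationWeight
  positivity

lemma sum_saturationWeight_mul (m R : ℕ) (r : ι → ℕ) (A : Finset ι) (p : ι → ℚ) :
    ∑ j ∈ A, saturationWeight m R r j * p j =
      (∑ j ∈ A, p j) / m + 2 * (∑ j ∈ A, (r j : ℚ) * p j) / R := by
  rw [Finset.mul_sum, Finset.sum_div, Finset.sum_div, ← Finset.sum_add_distrib]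
  refine Finset.sum_congr rfl fun j _ => ?_
  rw [saturationWeight]
  ring

lemma one_le_sum_saturationWeight {m R : ℕ} (hm : 1 ≤ m) (hR : 1 ≤ R) {r : ι → ℕ} {A : Finset ι}
    (hA : m ≤ A.card ∨ R ≤ 2 * ∑ j ∈ A, r j) : 1 ≤ ∑ j ∈ A, saturationWeight m R r j := by
  have hm' : (0 : ℚ) < m := by exact_mod_cast hm
  have hR' : (0 : ℚ) < R := by exact_mod_cast hR
  have hsum : ∑ j ∈ A, saturationWeight m R r j =
      (A.card : ℚ) / m + 2 * (∑ j ∈ A, r j : ℕ) / R := by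
    simpa using sum_saturationWeight_mul m R r A 1
  rw [hsum]
  rcases hA with hcard | hres
  · have hone : 1 ≤ (A.card : ℚ) / m := (one_le_div hm').2 (by exact_mod_cast hcard)
    exact le_add_of_le_of_nonneg hone (by positivity)
  · have hone : 1 ≤ 2 * ((∑ j ∈ A, r j : ℕ) : ℚ) / R :=
      (one_le_div hR').2 (by exact_mod_cast hres)
    exact le_add_of_nonneg_of_le (by positivity) hone

lemma le_two_mul_sum_of_lt_sum_add {R : ℕ} {r : ι → ℕ} {A : Finset ι} {a : ι} (hra : r a ≤ R)
    (hmin : ∀ j ∈ A, r a ≤ r j) (hover : R < ∑ j ∈ A, r j + r a) : R ≤ 2 * ∑ j ∈ A, r j := by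
  obtain ⟨k, hk⟩ : A.Nonempty := by
    rw [Finset.nonempty_iff_ne_empty]
    rintro rfl
    simp only [Finset.sum_empty, zero_add] at hover
    exact hover.not_ge hra
  have hload : r a ≤ ∑ j ∈ A, r j :=
    (hmin k hk).trans (Finset.single_le_sum_of_canonicallyOrdered hk)
  omega

/-- The invariant of list scheduling: `σ` schedules `J` feasibly within the start times `[0, s]`,
and up to time `s` the active jobs have total saturation weight at least `1` on average. -/
structure IsListSchedule (m R : ℕ) (J : Finset ι) (σ p : ι → ℚ) (r : ι → ℕ) (s : ℚ) : Prop where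
  nonneg : 0 ≤ s
  start_nonneg : ∀ j ∈ J, 0 ≤ σ j
  start_le : ∀ j ∈ J, σ j ≤ s
  feasible : Feasible m R J σ p r
  le_processedWeight : s ≤ processedWeight J σ p (saturationWeight m R r) s

namespace IsListSchedule

variable {m R : ℕ} {J : Finset ι} {σ p : ι → ℚ} {r : ι → ℕ} {s : ℚ}

lemma empty (m R : ℕ) (σ p : ι → ℚ) (r : ι → ℕ) : IsListSchedule m R ∅ σ p r 0 where
  nonneg := le_rfl
  start_nonneg := by simp
  start_le := by simp
  feasible := by simp [Feasible, activeSet]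
  le_processedWeight := by simp [processedWeight]

lemma exists_insert [DecidableEq ι] (h : IsListSchedule m R J σ p r s) (hm : 1 ≤ m)
    (hR : 1 ≤ R) {a : ι} (ha : a ∉ J) (hpa : 0 ≤ p a) (hra : r a ≤ R)
    (hmin : ∀ j ∈ J, r a ≤ r j) :
    ∃ x, IsListSchedule m R (insert a J) (Function.update σ a x) p r x := by
  let Fits (A : Finset ι) : Prop := A.card < m ∧ ∑ j ∈ A, r j + r a ≤ R
  have fits_empty : Fits ∅ := ⟨by rwa [Finset.card_empty], by rwa [Finset.sum_empty, zero_add]⟩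
  have saturated : ∀ A ⊆ J, ¬ Fits A → 1 ≤ ∑ j ∈ A, saturationWeight m R r j := by
    intro A hAJ hfull
    refine one_le_sum_saturationWeight hm hR ((not_and_or.1 hfull).imp not_lt.1 fun hover => ?_)
    exact le_two_mul_sum_of_lt_sum_add hra (fun j hj => hmin j (hAJ hj)) (not_le.1 hover)
  obtain ⟨x, hsx, ⟨hcard, hres⟩, hwork⟩ :=
    exists_admissible_time (p := p) fits_empty saturated h.start_le
  have hx : 0 ≤ x := h.nonneg.trans hsx
  have hσx : ∀ j ∈ J, σ j ≤ x := fun j hj => (h.start_le j hj).trans hsx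
  have hold : ∀ j ∈ J, Function.update σ a x j = σ j := fun j hj =>
    Function.update_of_ne (ne_of_mem_of_not_mem hj ha) _ _
  refine ⟨x, hx, ?_, ?_, h.feasible.insert_update ha hσx hcard hres, ?_⟩
  · refine (Finset.forall_mem_insert _ _ _).2 ⟨?_, fun j hj => ?_⟩
    · simpa only [Function.update_self] using hx
    · simpa only [hold j hj] using h.start_nonneg j hj
  · refine (Finset.forall_mem_insert _ _ _).2 ⟨?_, fun j hj => ?_⟩
    · rw [Function.update_self]
    · simpa only [hold j hj] using hσx j hj
  · rw [processedWeight_insert_update σ _ ha hpa]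
    linarith [h.le_processedWeight]

lemma start_le_sum_div_add (h : IsListSchedule m R J σ p r s) {j : ι} (hj : j ∈ J) :
    σ j ≤ (∑ j ∈ J, p j) / m + 2 * (∑ j ∈ J, (r j : ℚ) * p j) / R :=
  calc σ j ≤ s := h.start_le j hj
    _ ≤ processedWeight J σ p (saturationWeight m R r) s := h.le_processedWeight
    _ ≤ ∑ j ∈ J, saturationWeight m R r j * p j :=
      processedWeight_le J σ p (fun j _ => saturationWeight_nonneg m R r j) s
    _ = (∑ j ∈ J, p j) / m + 2 * (∑ j ∈ J, (r j : ℚ) * p j) / R :=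
      sum_saturationWeight_mul m R r J p

end IsListSchedule

lemma exists_isListSchedule {m R : ℕ} {J : Finset ι} {p : ι → ℚ} {r : ι → ℕ} (hm : 1 ≤ m)
    (hR : 1 ≤ R) (hp : ∀ j ∈ J, 0 ≤ p j) (hr : ∀ j ∈ J, r j ≤ R) :
    ∃ σ s, IsListSchedule m R J σ p r s := by
  classical
  induction J using Finset.induction_on_min_value r with
  | empty => exact ⟨0, 0, IsListSchedule.empty m R 0 p r⟩
  | insert a J ha hmin ih =>
    rw [Finset.forall_mem_insert] at hp hr
    obtain ⟨σ, s, h⟩ := ih hp.2 hr.2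
    obtain ⟨x, hx⟩ := h.exists_insert hm hR ha hp.1 hr.1 hmin
    exact ⟨Function.update σ a x, x, hx⟩

theorem medium_jobs_schedule_general (m R : ℕ) (J : Finset ι) (p : ι → ℚ) (r : ι → ℕ)
    (hm : 1 ≤ m) (hR : 1 ≤ R) (hp : ∀ j ∈ J, 0 ≤ p j) (hr : ∀ j ∈ J, r j ≤ R) :
    ∃ σ : ι → ℚ, (∀ j ∈ J, 0 ≤ σ j) ∧ Feasible m R J σ p r ∧
      ∀ j ∈ J, σ j ≤ (∑ j ∈ J, p j) / m + 2 * (∑ j ∈ J, (r j : ℚ) * p j) / R := by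
  obtain ⟨σ, s, h⟩ := exists_isListSchedule hm hR hp hr
  exact ⟨σ, h.start_nonneg, h.feasible, fun _ => h.start_le_sum_div_add⟩

end ListScheduling

/-- medium jobs can be scheduled with makespan at most `4εT`:
if every job has processing time at most `εT` and `p(J)/m + 2·area(J)/R ≤ 3εT`, then
there is a feasible schedule in which every job finishes by time `4εT`. -/
theorem medium_jobs_schedule {ι : Type*} (m R : ℕ) (J : Finset ι)
    (p : ι → ℚ) (r : ι → ℕ)
    (hm : 1 ≤ m) (hR : 1 ≤ R)
    (hp : ∀ j ∈ J, 0 < p j) (hr : ∀ j ∈ J, r j ≤ R)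
    (ε : ℚ) (hε0 : 0 < ε) (hε1 : ε ≤ 1)
    (T : ℚ) (hT : 0 < T)
    (hsmall : ∀ j ∈ J, p j ≤ ε * T)
    (hbound : (∑ j ∈ J, p j) / m + 2 * (∑ j ∈ J, (r j : ℚ) * p j) / R ≤ 3 * ε * T) :
    ∃ σ : ι → ℚ, (∀ j ∈ J, 0 ≤ σ j) ∧ Feasible m R J σ p r ∧
      ∀ j ∈ J, σ j + p j ≤ 4 * ε * T := by
  obtain ⟨σ, hσ0, hσ, hstart⟩ :=
    medium_jobs_schedule_general m R J p r hm hR (fun j hj => (hp j hj).le) hr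
  exact ⟨σ, hσ0, hσ, fun j hj => by linarith [hstart j hj, hsmall j hj]⟩
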